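/- Let E be a real inner product space, let ε ∈ (0, π), let a ≥ 3 be a real number with 1/(a − 1) ≤ sin(ε/2), and let s ≥ 1 be an integer. Suppose u and v are unit vectors in E, and for each i ∈ {0, …, s−1} and j ∈ {1, 2} suppose w_i^j ∈ E satisfies ‖w_i^j‖ ≤ 1. If a^s·(u + v) + Σ_{j=1}^{2} Σ_{i=0}^{s-1} a^i · w_i^j = 0, then π − θ < ε, where θ ∈ [0, π] is the angle between u and v. -/

import Mathlib

theorem norm_sum_pow_smul_le {E : Type*} [SeminormedAddCommGroup E] [NormedSpace ℝ E]
    {a : ℝ} (ha₀ : 0 ≤ a) (ha₁ : a ≠ 1) {s : ℕ} (w : Fin s → E) (hw : ∀ i, ‖w i‖ ≤ 1) :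
    ‖∑ i : Fin s, a ^ (i : ℕ) • w i‖ ≤ (a ^ s - 1) / (a - 1) := by
  rw [← geom_sum_eq ha₁, ← Fin.sum_univ_eq_sum_range (fun i => a ^ i)]
  refine norm_sum_le_of_le _ fun i _ => ?_
  rw [norm_smul, Real.norm_of_nonneg (pow_nonneg ha₀ _)]
  exact mul_le_of_le_one_right (pow_nonneg ha₀ _) (hw i)

theorem norm_add_eq_two_mul_cos_half_angle {E : Type*} [NormedAddCommGroup E]
    [InnerProductSpace ℝ E] {u v : E} (hu : ‖u‖ = 1) (hv : ‖v‖ = 1) :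
    ‖u + v‖ = 2 * Real.cos (InnerProductGeometry.angle u v / 2) := by
  have hcos : 0 ≤ Real.cos (InnerProductGeometry.angle u v / 2) :=
    Real.cos_nonneg_of_neg_pi_div_two_le_of_le
      (by linarith [InnerProductGeometry.angle_nonneg u v, Real.pi_pos])
      (by linarith [InnerProductGeometry.angle_le_pi u v])
  have hinner := InnerProductGeometry.cos_angle_mul_norm_mul_norm u v
  have hhalf := Real.cos_sq (InnerProductGeometry.angle u v / 2)
  rw [mul_div_cancel₀ _ (two_ne_zero' ℝ)] at hhalf
  rw [← sq_eq_sq₀ (norm_nonneg _) (by positivity), norm_add_sq_real, mul_pow, hhalf, ← hinner,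
    hu, hv]
  ring

/-- Angle form of Lemma 1.1 (second part): under the flower stationarity condition
with weights `a^i`, the petal with the highest nonzero weight `a^s` has an angle
`θ` with `π − θ < ε`. -/
theorem wide_angle_of_flower_stationarity
    {E : Type*} [NormedAddCommGroup E] [InnerProductSpace ℝ E]
    (ε : ℝ) (hε0 : 0 < ε) (hεπ : ε < Real.pi)
    (a : ℝ) (ha : 3 ≤ a) (ha' : 1 / (a - 1) ≤ Real.sin (ε / 2))
    (s : ℕ) (hs : 1 ≤ s)
    (u v : E) (hu : ‖u‖ = 1) (hv : ‖v‖ = 1)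
    (w : Fin 2 → Fin s → E) (hw : ∀ j i, ‖w j i‖ ≤ 1)
    (hstat : a ^ s • (u + v) + ∑ j : Fin 2, ∑ i : Fin s, a ^ (i : ℕ) • w j i = 0) :
    Real.pi - InnerProductGeometry.angle u v < ε := by
  have hpow : 0 < a ^ s := by positivity
  have hsum : ‖∑ j : Fin 2, ∑ i : Fin s, a ^ (i : ℕ) • w j i‖ ≤ 2 * ((a ^ s - 1) / (a - 1)) := by
    rw [Fin.sum_univ_two, two_mul]
    exact norm_add_le_of_le
      (norm_sum_pow_smul_le (by linarith) (by linarith) _ (hw 0))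
      (norm_sum_pow_smul_le (by linarith) (by linarith) _ (hw 1))
  rw [← norm_neg, ← eq_neg_of_add_eq_zero_left hstat, norm_smul, Real.norm_of_nonneg hpow.le,
    norm_add_eq_two_mul_cos_half_angle hu hv] at hsum
  have hlt : (a ^ s - 1) / (a - 1) < a ^ s * (1 / (a - 1)) := by
    rw [mul_one_div]
    exact div_lt_div_of_pos_right (by linarith) (by linarith)
  have hcos : Real.cos (InnerProductGeometry.angle u v / 2) < 1 / (a - 1) :=
    lt_of_mul_lt_mul_left (by linarith) hpow.le
  by_contra! hangle
  have hmono := Real.cos_le_cos_of_nonneg_of_le_pi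
    (x := InnerProductGeometry.angle u v / 2) (y := Real.pi / 2 - ε / 2)
    (by linarith [InnerProductGeometry.angle_nonneg u v]) (by linarith) (by linarith)
  rw [Real.cos_pi_div_two_sub] at hmono
  linarith
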